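/- arXiv:2005.02045 — 2 statements merged into one kernel-verified Lean document; each statement's English description precedes it below -/
import Mathlib

section
/- Let X and Y be real Banach spaces and 1 < p < ∞. If X and Y both have the Daugavet property, then 𝒯^s(X ⊕_p Y) = 𝒯(X ⊕_p Y) = 𝒯^cc(X ⊕_p Y) = 2^{1/p}. -/
open Metric Set

noncomputable section

variable (X : Type*) [NormedAddCommGroup X] [NormedSpace ℝ X]

/-- A subset `U` of `X` is weakly open if it is open in the weak topology of `X`. -/
def IsWeaklyOpen (U : Set X) : Prop := IsOpen (toWeakSpace ℝ X '' U)

/-- The slice `S(B_X, f, α) = {x ∈ B_X : f x > 1 - α}` of the closed unit ball of `X`. -/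
def sliceSet (f : X →L[ℝ] ℝ) (α : ℝ) : Set X :=
  {y ∈ closedBall (0 : X) 1 | 1 - α < f y}

/-- `S` is a slice of the closed unit ball of `X`, i.e. `S = S(B_X, f, α)` for some norm-one
functional `f` and some `α > 0`. -/
def IsSlice (S : Set X) : Prop :=
  ∃ f : X →L[ℝ] ℝ, ‖f‖ = 1 ∧ ∃ α > (0 : ℝ), S = sliceSet X f α

/-- The Daugavet index of thickness `𝒯ˢ(X)`: the infimum of all `r > 0` such that some slice of
the closed unit ball is contained in a closed ball of radius `r` centered at a point of the unit
sphere. -/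
def Ts : ℝ :=
  sInf {r : ℝ | 0 < r ∧ ∃ x : X, ‖x‖ = 1 ∧ ∃ S : Set X, IsSlice X S ∧ S ⊆ closedBall x r}

/-- `W` is a nonempty relatively weakly open subset of the closed unit ball of `X`. -/
def IsRelWeakOpen (W : Set X) : Prop :=
  W.Nonempty ∧ ∃ U : Set X, IsWeaklyOpen X U ∧ W = closedBall (0 : X) 1 ∩ U

/-- The Daugavet index of thickness `𝒯(X)`: the infimum of all `r > 0` such that some nonempty
relatively weakly open subset of the closed unit ball is contained in a closed ball of radius `r`
centered at a point of the unit sphere. -/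
def Tw : ℝ :=
  sInf {r : ℝ | 0 < r ∧ ∃ x : X, ‖x‖ = 1 ∧ ∃ W : Set X, IsRelWeakOpen X W ∧
    W ⊆ closedBall x r}

/-- The convex combination `∑ i, l i • W i` of the sets `W i` (the set of all sums
`∑ i, l i • w i` with `w i ∈ W i`). -/
def comboSet {n : ℕ} (l : Fin n → ℝ) (W : Fin n → Set X) : Set X :=
  {z : X | ∃ w : Fin n → X, (∀ i, w i ∈ W i) ∧ z = ∑ i, l i • w i}

/-- The Daugavet index of thickness `𝒯ᶜᶜ(X)`: the infimum of all `r > 0` such that some convex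
combination of nonempty relatively weakly open subsets of the closed unit ball is contained in a
closed ball of radius `r` centered at a point of the unit sphere. -/
def Tcc : ℝ :=
  sInf {r : ℝ | 0 < r ∧ ∃ x : X, ‖x‖ = 1 ∧ ∃ (n : ℕ) (l : Fin n → ℝ) (W : Fin n → Set X),
    (∀ i, 0 ≤ l i) ∧ (∑ i, l i) = 1 ∧ (∀ i, IsRelWeakOpen X (W i)) ∧
    comboSet X l W ⊆ closedBall x r}

/-- `X` has the Daugavet property: for every `x` in the unit sphere, every `ε > 0` and every
slice `S` of the closed unit ball there exists `y ∈ S` with `‖x - y‖ ≥ 2 - ε`. -/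
def DaugavetProperty : Prop :=
  ∀ x : X, ‖x‖ = 1 → ∀ ε > (0 : ℝ), ∀ S : Set X, IsSlice X S → ∃ y ∈ S, 2 - ε ≤ ‖x - y‖

/-!
In a space with the Daugavet property, from any base point and for any step size some direction in
a given slice of the unit ball increases the norm by almost the full step. Call this almost
additivity along a set: it passes to sums and multiples of sets. Given a continuous linear map `F`
into a Euclidean space, the values near which `F` has such directions form a closed convex set. It
contains the points of the compact set `closure (F '' closedBall 0 1)` that are farthest from some
center, as slices concentrate near them, and these points generate that set as a closed convex hull.
Hence slices may be replaced by weakly open subsets, of balls of any radius.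

In `X ⊕_p Y`, a relatively weakly open set contains a product of such sets whose radii have sum at
least `1`, so along convex combinations of weakly open sets `z ↦ ‖z.fst‖ + ‖z.snd‖` almost
increases by `1`. It is at least `1` at a unit vector, hence at least almost `2` after the step, and
by the power mean inequality the `p`-norm is then at least almost `2 ^ (1 / p)`. Conversely, in a
small slice given by a functional on `X`, all second coordinates are small, so the slice is almost
within `2 ^ (1 / p)` of any unit vector of `Y`.
-/

section AlmostAdditive

variable {E : Type*} [AddCommGroup E] [Module ℝ E]

/-- `N` is almost additive along `S` at rate `r`: from any base point `e` and for any step size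
`t ≥ 0`, some direction `u ∈ S` increases `N` by at least `t * r`, up to an arbitrarily small error.
For `N` the norm and `r = 1` this is the Daugavet-type behaviour of subsets of the unit ball; the
free step size is what makes the notion stable under sums of sets. -/
def AlmostAdditiveAlong (N : E → ℝ) (r : ℝ) (S : Set E) : Prop :=
  ∀ e : E, ∀ t ≥ (0 : ℝ), ∀ ε > (0 : ℝ), ∃ u ∈ S, N e + t * r - ε ≤ N (e + t • u)

namespace AlmostAdditiveAlong

variable {N : E → ℝ} {r r' : ℝ} {S S' : Set E}

lemma mono (h : AlmostAdditiveAlong N r S) (hr : r' ≤ r) (hS : S ⊆ S') :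
    AlmostAdditiveAlong N r' S' := by
  intro e t ht ε hε
  obtain ⟨u, hu, hN⟩ := h e t ht ε hε
  exact ⟨u, hS hu, by linarith [mul_le_mul_of_nonneg_left hr ht]⟩

open scoped Pointwise

lemma zero (N : E → ℝ) : AlmostAdditiveAlong N 0 (0 : Set E) :=
  fun e t _ ε hε => ⟨0, Set.zero_mem_zero, by simp [hε.le]⟩

lemma smul (h : AlmostAdditiveAlong N r S) {a : ℝ} (ha : 0 ≤ a) :
    AlmostAdditiveAlong N (a * r) (a • S) := by
  intro e t ht ε hε
  obtain ⟨u, hu, hN⟩ := h e (t * a) (mul_nonneg ht ha) ε hε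
  exact ⟨a • u, Set.smul_mem_smul_set hu, by rwa [smul_smul, ← mul_assoc]⟩

lemma add (h : AlmostAdditiveAlong N r S) (h' : AlmostAdditiveAlong N r' S') :
    AlmostAdditiveAlong N (r + r') (S + S') := by
  intro e t ht ε hε
  obtain ⟨u, hu, hN⟩ := h e t ht (ε / 2) (half_pos hε)
  obtain ⟨u', hu', hN'⟩ := h' (e + t • u) t ht (ε / 2) (half_pos hε)
  refine ⟨u + u', Set.add_mem_add hu hu', ?_⟩
  rw [smul_add, ← add_assoc]
  linarith

lemma sum {ι : Type*} (s : Finset ι) {r : ι → ℝ} {S : ι → Set E}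
    (h : ∀ i, AlmostAdditiveAlong N (r i) (S i)) :
    AlmostAdditiveAlong N (∑ i ∈ s, r i) (∑ i ∈ s, S i) := by
  induction s using Finset.cons_induction with
  | empty => exact zero N
  | cons i s hi ih =>
    rw [Finset.sum_cons, Finset.sum_cons]
    exact (h i).add ih

lemma prod {F : Type*} [AddCommGroup F] [Module ℝ F] {p : ENNReal} {M : F → ℝ} {T : Set F}
    (hN : AlmostAdditiveAlong N r S) (hM : AlmostAdditiveAlong M r' T) :
    AlmostAdditiveAlong (fun z : WithLp p (E × F) => N z.fst + M z.snd) (r + r')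
      {z | z.fst ∈ S ∧ z.snd ∈ T} := by
  intro e t ht ε hε
  obtain ⟨u, hu, hNu⟩ := hN e.fst t ht (ε / 2) (half_pos hε)
  obtain ⟨v, hv, hMv⟩ := hM e.snd t ht (ε / 2) (half_pos hε)
  refine ⟨WithLp.toLp p (u, v), ⟨hu, hv⟩, ?_⟩
  change N e.fst + M e.snd + t * (r + r') - ε ≤ N (e.fst + t • u) + M (e.snd + t • v)
  linarith

end AlmostAdditiveAlong

end AlmostAdditive

section FarthestPoints

/-- The points of `K` at which the distance to some center attains its maximum over `K`. They
replace the strongly exposed points in a Krein-Milman type argument. -/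
def farthestPoints {E : Type*} [PseudoMetricSpace E] (K : Set E) : Set E :=
  {k ∈ K | ∃ c, ∀ z ∈ K, dist z c ≤ dist k c}

variable {E : Type*} [NormedAddCommGroup E] [InnerProductSpace ℝ E]

open scoped RealInnerProductSpace

lemma norm_sub_sq_le_of_norm_sub_le {c k z : E} (h : ‖z - c‖ ≤ ‖k - c‖) :
    ‖z - k‖ ^ 2 ≤ 2 * (⟪k - c, k⟫ - ⟪k - c, z⟫) := by
  have hsq : ‖z - c‖ ^ 2 ≤ ‖k - c‖ ^ 2 := by gcongr
  have hexpand := norm_add_sq_real (z - k) (k - c)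
  rw [sub_add_sub_cancel, real_inner_comm, inner_sub_right] at hexpand
  linarith

-- If a half-space `⟪v, ·⟫ ≤ s` contained the farthest points but missed `a ∈ K`, then the point of
-- `K` farthest from `a - τ • v` would violate this for large `τ`.
lemma subset_closedConvexHull_farthestPoints [CompleteSpace E] {K : Set E} (hK : IsCompact K) :
    K ⊆ closedConvexHull ℝ (farthestPoints K) := by
  intro a ha
  by_contra hmem
  obtain ⟨f, s, hs, hsa⟩ := geometric_hahn_banach_closed_point
    convex_closedConvexHull isClosed_closedConvexHull hmem
  obtain ⟨v, rfl⟩ := (InnerProductSpace.toDual ℝ E).surjective f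
  simp only [InnerProductSpace.toDual_apply_apply] at hs hsa
  obtain ⟨D, hD⟩ := hK.isBounded.subset_closedBall a
  have hgap : 0 < ⟪v, a⟫ - s := sub_pos.2 hsa
  set τ := (D ^ 2 + 1) / (2 * (⟪v, a⟫ - s)) with hτ
  obtain ⟨k, hkK, hkmax⟩ := hK.exists_isMaxOn ⟨a, ha⟩
    (f := fun z => dist z (a - τ • v)) (by fun_prop)
  have hvk : ⟪v, k⟫ < s := hs k (subset_closedConvexHull ⟨hkK, _, hkmax⟩)
  have hnear : ‖k - a‖ ^ 2 ≤ D ^ 2 := by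
    gcongr
    exact mem_closedBall_iff_norm.1 (hD hkK)
  have hfar : ‖τ • v‖ ^ 2 ≤ ‖k - a + τ • v‖ ^ 2 := by
    have : dist a (a - τ • v) ≤ dist k (a - τ • v) := hkmax ha
    gcongr
    rwa [dist_eq_norm, dist_eq_norm, sub_sub_cancel, ← sub_add] at this
  rw [norm_add_sq_real, inner_smul_right, real_inner_comm, inner_sub_right] at hfar
  have hτgap : 2 * (τ * (⟪v, a⟫ - s)) = D ^ 2 + 1 := by rw [hτ]; field_simp
  have : τ * (⟪v, k⟫ - ⟪v, a⟫) ≤ τ * (s - ⟪v, a⟫) := by gcongr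
  linarith

end FarthestPoints

section WeaklyOpen

variable {X}

lemma isWeaklyOpen_iff {U : Set X} :
    IsWeaklyOpen X U ↔ ∃ V : Set (WeakSpace ℝ X), IsOpen V ∧ toWeakSpace ℝ X ⁻¹' V = U := by
  constructor
  · exact fun hU => ⟨_, hU, Set.preimage_image_eq U (toWeakSpace ℝ X).injective⟩
  · rintro ⟨V, hV, rfl⟩
    rwa [IsWeaklyOpen, Set.image_preimage_eq V (toWeakSpace ℝ X).surjective]

lemma isWeaklyOpen_setOf_lt (f : X →L[ℝ] ℝ) (c : ℝ) : IsWeaklyOpen X {x | c < f x} :=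
  isWeaklyOpen_iff.2 ⟨_, isOpen_lt continuous_const
    (WeakBilin.eval_continuous (topDualPairing ℝ X).flip f), rfl⟩

lemma IsWeaklyOpen.exists_preimage_subset {U : Set X} (hU : IsWeaklyOpen X U) {a : X}
    (ha : a ∈ U) :
    ∃ (I : Finset (StrongDual ℝ X)) (F : X →L[ℝ] EuclideanSpace ℝ I)
      (O : Set (EuclideanSpace ℝ I)), IsOpen O ∧ F a ∈ O ∧ F ⁻¹' O ⊆ U := by
  obtain ⟨V, hV, rfl⟩ := isWeaklyOpen_iff.1 hU
  obtain ⟨P, hP, rfl⟩ := isOpen_induced_iff.1 hV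
  obtain ⟨I, u, hu, huP⟩ := isOpen_pi_iff.1 hP _ ha
  let F : X →L[ℝ] EuclideanSpace ℝ I :=
    (EuclideanSpace.equiv I ℝ).symm.toContinuousLinearMap.comp
      (ContinuousLinearMap.pi fun f => f.1)
  refine ⟨I, F, EuclideanSpace.equiv I ℝ ⁻¹' Set.univ.pi fun f : I => u f.1, ?_,
    fun f _ => (hu f.1 f.2).2, fun x hx => huP fun f hf => hx ⟨f, hf⟩ (Set.mem_univ _)⟩
  exact (isOpen_set_pi Set.finite_univ fun (f : I) _ => (hu f.1 f.2).1).preimage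
    (EuclideanSpace.equiv I ℝ).continuous

variable (X) in
lemma exists_isSlice [Nontrivial X] : ∃ S, IsSlice X S := by
  obtain ⟨f, hf, -⟩ := exists_dual_vector' ℝ (0 : X)
  exact ⟨_, f, hf, 1, one_pos, rfl⟩

lemma IsSlice.subset_closedBall {S : Set X} (hS : IsSlice X S) : S ⊆ closedBall 0 1 := by
  obtain ⟨f, -, α, -, rfl⟩ := hS
  exact fun _ hu => hu.1

lemma IsSlice.nonempty {S : Set X} (hS : IsSlice X S) : S.Nonempty := by
  obtain ⟨f, hf, α, hα, rfl⟩ := hS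
  obtain ⟨y, hy, hfy⟩ := f.exists_lt_apply_of_lt_opNorm (r := 1 - α) (by linarith)
  rcases lt_abs.1 hfy with h | h
  · exact ⟨y, by simpa using hy.le, h⟩
  · exact ⟨-y, by simpa using hy.le, by rwa [map_neg]⟩

lemma IsSlice.isRelWeakOpen {S : Set X} (hS : IsSlice X S) : IsRelWeakOpen X S := by
  refine ⟨hS.nonempty, ?_⟩
  obtain ⟨f, -, α, -, rfl⟩ := hS
  exact ⟨_, isWeaklyOpen_setOf_lt f (1 - α), rfl⟩

lemma exists_isSlice_subset [Nontrivial X] (g : X →L[ℝ] ℝ) {c : ℝ} {a : X} (ha : ‖a‖ ≤ 1)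
    (hc : c < g a) : ∃ S, IsSlice X S ∧ S ⊆ closedBall 0 1 ∩ {u | c < g u} := by
  rcases eq_or_ne g 0 with rfl | hg
  · obtain ⟨S, hS⟩ := exists_isSlice X
    exact ⟨S, hS, fun u hu => ⟨hS.subset_closedBall hu, hc⟩⟩
  · have hg_pos : 0 < ‖g‖ := norm_pos_iff.2 hg
    have hcg : c < ‖g‖ := hc.trans_le ((le_abs_self _).trans (g.unit_le_opNorm a ha))
    refine ⟨_, ⟨‖g‖⁻¹ • g, norm_smul_inv_norm hg, 1 - c / ‖g‖,
      sub_pos.2 ((div_lt_one hg_pos).2 hcg), rfl⟩, fun u hu => ⟨hu.1, ?_⟩⟩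
    have := hu.2
    rwa [sub_sub_cancel, smul_apply, smul_eq_mul, inv_mul_eq_div,
      div_lt_div_iff_of_pos_right hg_pos] at this

end WeaklyOpen

section Daugavet

variable {X}

lemma add_mul_one_sub_le_norm_smul_add_smul {x u : X} (hx : ‖x‖ ≤ 1) (hu : ‖u‖ ≤ 1)
    {δ s t : ℝ} (hs : 0 ≤ s) (ht : 0 ≤ t) (h : 2 - δ ≤ ‖x + u‖) :
    (s + t) * (1 - δ) ≤ ‖s • x + t • u‖ := by
  wlog hts : t ≤ s generalizing x u s t
  · rw [add_comm s, add_comm (s • x)]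
    exact this hu hx ht hs (by rwa [add_comm]) (le_of_not_ge hts)
  have hδ : 0 ≤ δ := by linarith [norm_add_le x u]
  have hsplit : s * ‖x + u‖ ≤ ‖s • x + t • u‖ + (s - t) * ‖u‖ :=
    calc s * ‖x + u‖ = ‖(s • x + t • u) + (s - t) • u‖ := by
          rw [← norm_smul_of_nonneg hs]
          congr 1
          module
      _ ≤ ‖s • x + t • u‖ + (s - t) * ‖u‖ := by
          rw [← norm_smul_of_nonneg (sub_nonneg.2 hts)]
          exact norm_add_le _ _
  nlinarith [mul_le_mul_of_nonneg_left h hs, mul_le_mul_of_nonneg_left hu (sub_nonneg.2 hts),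
    mul_nonneg ht hδ]

lemma exists_norm_eq_one_norm_smul_eq [Nontrivial X] (e : X) : ∃ x : X, ‖x‖ = 1 ∧ ‖e‖ • x = e := by
  rcases eq_or_ne e 0 with rfl | he
  · obtain ⟨x, hx⟩ := exists_norm_eq X zero_le_one
    exact ⟨x, hx, by simp⟩
  · exact ⟨‖e‖⁻¹ • e, norm_smul_inv_norm he, smul_inv_smul₀ (norm_ne_zero_iff.2 he) e⟩

namespace DaugavetProperty

variable [Nontrivial X]

lemma almostAdditiveAlong_of_isSlice (hX : DaugavetProperty X) {S : Set X} (hS : IsSlice X S) :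
    AlmostAdditiveAlong norm 1 S := by
  intro e t ht ε hε
  obtain ⟨x, hx, hex⟩ := exists_norm_eq_one_norm_smul_eq e
  have hpos : 0 < ‖e‖ + t + 1 := by positivity
  obtain ⟨u, huS, hu⟩ := hX (-x) (by rwa [norm_neg]) (ε / (‖e‖ + t + 1)) (by positivity) S hS
  refine ⟨u, huS, ?_⟩
  rw [← neg_add', norm_neg] at hu
  have hadd := add_mul_one_sub_le_norm_smul_add_smul hx.le
    (mem_closedBall_zero_iff.1 (hS.subset_closedBall huS)) (norm_nonneg e) ht hu
  rw [hex] at hadd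
  have hsmall : (‖e‖ + t) * (ε / (‖e‖ + t + 1)) ≤ ε := by
    rw [mul_div_assoc', div_le_iff₀ hpos]
    nlinarith
  linarith

lemma almostAdditiveAlong_setOf_lt (hX : DaugavetProperty X) (g : X →L[ℝ] ℝ) {c : ℝ} {a : X}
    (ha : ‖a‖ ≤ 1) (hc : c < g a) :
    AlmostAdditiveAlong norm 1 (closedBall 0 1 ∩ {u | c < g u}) := by
  obtain ⟨S, hS, hSg⟩ := exists_isSlice_subset g ha hc
  exact (hX.almostAdditiveAlong_of_isSlice hS).mono le_rfl hSg

end DaugavetProperty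

open scoped Topology Pointwise

/-- The values `k` such that the norm is almost additive along the part of the unit ball that `F`
maps into any given neighbourhood of `k`. -/
def additiveValues {E : Type*} [TopologicalSpace E] (F : X → E) : Set E :=
  {k | ∀ O ∈ 𝓝 k, AlmostAdditiveAlong norm 1 (closedBall 0 1 ∩ F ⁻¹' O)}

lemma isClosed_additiveValues {E : Type*} [TopologicalSpace E] (F : X → E) :
    IsClosed (additiveValues F) := by
  refine isClosed_of_closure_subset fun k hk O hO => ?_
  obtain ⟨k', hk'O, hk'⟩ := mem_closure_iff_nhds.1 hk _ (interior_mem_nhds.2 hO)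
  exact hk' O (mem_interior_iff_mem_nhds.1 hk'O)

lemma convex_additiveValues {E : Type*} [AddCommGroup E] [Module ℝ E] [TopologicalSpace E]
    [ContinuousAdd E] [ContinuousConstSMul ℝ E] (F : X →ₗ[ℝ] E) :
    Convex ℝ (additiveValues F) := by
  intro k₁ hk₁ k₂ hk₂ a b ha hb hab O hO
  have hcont : Continuous fun z : E × E => a • z.1 + b • z.2 := by fun_prop
  obtain ⟨O₁, hO₁, O₂, hO₂, hsub⟩ := mem_nhds_prod_iff.1 (hcont.tendsto (k₁, k₂) hO)
  refine (((hk₁ O₁ hO₁).smul ha).add ((hk₂ O₂ hO₂).smul hb)).mono (by linarith) ?_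
  rintro _ ⟨_, ⟨u₁, ⟨hu₁, hF₁⟩, rfl⟩, _, ⟨u₂, ⟨hu₂, hF₂⟩, rfl⟩, rfl⟩
  refine ⟨convex_closedBall 0 1 hu₁ hu₂ ha hb hab, ?_⟩
  have : a • F u₁ + b • F u₂ ∈ O := hsub (Set.mk_mem_prod hF₁ hF₂)
  simpa using this

namespace DaugavetProperty

variable [Nontrivial X] {E : Type*} [NormedAddCommGroup E] [InnerProductSpace ℝ E]

open scoped RealInnerProductSpace

-- A point `k` farthest from `c` is strongly exposed by `k - c`, so `F` maps a slice close to `k`.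
lemma farthestPoints_subset_additiveValues (hX : DaugavetProperty X) (F : X →L[ℝ] E) :
    farthestPoints (closure (F '' closedBall 0 1)) ⊆ additiveValues F := by
  rintro k ⟨hk, c, hmax⟩ O hO
  obtain ⟨ε, hε, hεO⟩ := Metric.mem_nhds_iff.1 hO
  obtain ⟨_, ha, a, ha_ball, rfl⟩ := mem_closure_iff.1 hk
    {z | ⟪k - c, k⟫ - ε ^ 2 / 2 < ⟪k - c, z⟫}
    (isOpen_lt continuous_const (by fun_prop))
    (by simp only [Set.mem_ofPred_eq]; linarith [pow_pos hε 2])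
  refine (hX.almostAdditiveAlong_setOf_lt ((innerSL ℝ (k - c)).comp F)
    (mem_closedBall_zero_iff.1 ha_ball) ha).mono le_rfl fun u hu => ⟨hu.1, hεO ?_⟩
  have hslice : ⟪k - c, k⟫ - ε ^ 2 / 2 < ⟪k - c, F u⟫ := hu.2
  have hfar := hmax (F u) (subset_closure ⟨u, hu.1, rfl⟩)
  rw [dist_eq_norm, dist_eq_norm] at hfar
  rw [mem_ball_iff_norm]
  refine lt_of_pow_lt_pow_left₀ 2 hε.le ?_
  linarith [norm_sub_sq_le_of_norm_sub_le hfar]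

lemma image_closedBall_subset_additiveValues [FiniteDimensional ℝ E] (hX : DaugavetProperty X)
    (F : X →L[ℝ] E) : F '' closedBall 0 1 ⊆ additiveValues F := by
  have hK : IsCompact (closure (F '' closedBall 0 1)) :=
    (F.lipschitz.isBounded_image isBounded_closedBall).isCompact_closure
  exact subset_closure.trans <| (subset_closedConvexHull_farthestPoints hK).trans <|
    closedConvexHull_min (hX.farthestPoints_subset_additiveValues F)
      (convex_additiveValues F.toLinearMap) (isClosed_additiveValues F)

lemma almostAdditiveAlong_closedBall_inter (hX : DaugavetProperty X) {U : Set X}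
    (hU : IsWeaklyOpen X U) {a : X} (ha : a ∈ U) {r : ℝ} (har : ‖a‖ ≤ r) :
    AlmostAdditiveAlong norm r (closedBall 0 r ∩ U) := by
  have hr : 0 ≤ r := (norm_nonneg a).trans har
  obtain ⟨I, F, O, hO, haO, hOU⟩ := hU.exists_preimage_subset ha
  obtain ⟨b, hb, rfl⟩ : a ∈ r • closedBall (0 : X) 1 := by
    rwa [smul_unitClosedBall_of_nonneg hr, mem_closedBall_zero_iff]
  have hball : AlmostAdditiveAlong norm 1 (closedBall 0 1 ∩ (r • F) ⁻¹' O) :=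
    hX.image_closedBall_subset_additiveValues (r • F) ⟨b, hb, rfl⟩ O
      (hO.mem_nhds (by simpa using haO))
  refine (hball.smul hr).mono (mul_one r).ge ?_
  rintro _ ⟨u, ⟨hu, huO⟩, rfl⟩
  refine ⟨?_, hOU (by simpa using huO)⟩
  rw [← smul_unitClosedBall_of_nonneg hr]
  exact Set.smul_mem_smul_set hu

end DaugavetProperty

end Daugavet

section Thickness

/-- The infimum defining the three indices `𝒯ˢ`, `𝒯` and `𝒯ᶜᶜ`, for an arbitrary family `P` of test
sets. -/
def thickness {E : Type*} [NormedAddCommGroup E] (P : Set E → Prop) : ℝ :=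
  sInf {r : ℝ | 0 < r ∧ ∃ x : E, ‖x‖ = 1 ∧ ∃ S : Set E, P S ∧ S ⊆ closedBall x r}

lemma thickness_le {E : Type*} [NormedAddCommGroup E] {P : Set E → Prop} {r : ℝ} (hr : 0 < r)
    {x : E} (hx : ‖x‖ = 1) {S : Set E} (hS : P S) (hsub : S ⊆ closedBall x r) : thickness P ≤ r :=
  csInf_le ⟨0, fun _ h => h.1.le⟩ ⟨hr, x, hx, S, hS, hsub⟩

-- A test set inside the unit ball is needed because an infimum over `∅` would be `0`.
lemma le_thickness {E : Type*} [NormedAddCommGroup E] [NormedSpace ℝ E] [Nontrivial E]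
    {P : Set E → Prop} {S₀ : Set E} (hS₀ : P S₀) (hS₀_ball : S₀ ⊆ closedBall 0 1) {m : ℝ}
    (h : ∀ x : E, ‖x‖ = 1 → ∀ S, P S → ∀ r, S ⊆ closedBall x r → m ≤ r) : m ≤ thickness P := by
  obtain ⟨x, hx⟩ := exists_norm_eq E zero_le_one
  have hsub : S₀ ⊆ closedBall x 2 := hS₀_ball.trans <|
    closedBall_subset_closedBall' (by rw [dist_zero_left, hx]; norm_num)
  exact le_csInf ⟨2, two_pos, x, hx, S₀, hS₀, hsub⟩
    fun r ⟨_, x, hx, S, hS, hsub⟩ => h x hx S hS r hsub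

/-- `C` is a convex combination of nonempty relatively weakly open subsets of the unit ball. -/
def IsConvexComboRelWeakOpen (C : Set X) : Prop :=
  ∃ (n : ℕ) (l : Fin n → ℝ) (W : Fin n → Set X),
    (∀ i, 0 ≤ l i) ∧ ∑ i, l i = 1 ∧ (∀ i, IsRelWeakOpen X (W i)) ∧ comboSet X l W = C

variable {X}

lemma Tcc_eq_thickness : Tcc X = thickness (IsConvexComboRelWeakOpen X) := by
  refine congrArg sInf (Set.ext fun r => and_congr_right fun _ => exists_congr fun x =>
    and_congr_right fun _ => ?_)
  constructor
  · rintro ⟨n, l, W, hl, hl1, hW, hsub⟩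
    exact ⟨_, ⟨n, l, W, hl, hl1, hW, rfl⟩, hsub⟩
  · rintro ⟨_, ⟨n, l, W, hl, hl1, hW, rfl⟩, hsub⟩
    exact ⟨n, l, W, hl, hl1, hW, hsub⟩

open scoped Pointwise in
lemma comboSet_eq_sum {n : ℕ} (l : Fin n → ℝ) (W : Fin n → Set X) :
    comboSet X l W = ∑ i, l i • W i := by
  ext z
  rw [Set.mem_fintype_sum]
  constructor
  · rintro ⟨w, hw, rfl⟩
    exact ⟨fun i => l i • w i, fun i => Set.smul_mem_smul_set (hw i), rfl⟩
  · rintro ⟨g, hg, rfl⟩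
    choose w hw hwg using hg
    exact ⟨w, hw, by simp only [hwg]⟩

open scoped Pointwise in
lemma comboSet_one (W : Set X) : comboSet X (fun _ : Fin 1 => 1) (fun _ => W) = W := by
  rw [comboSet_eq_sum, Fin.sum_univ_one, one_smul]

lemma IsRelWeakOpen.isConvexComboRelWeakOpen {W : Set X} (hW : IsRelWeakOpen X W) :
    IsConvexComboRelWeakOpen X W :=
  ⟨1, fun _ => 1, fun _ => W, fun _ => zero_le_one, by simp, fun _ => hW, comboSet_one W⟩

lemma AlmostAdditiveAlong.of_isConvexComboRelWeakOpen {N : X → ℝ} {C : Set X}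
    (hC : IsConvexComboRelWeakOpen X C)
    (h : ∀ W, IsRelWeakOpen X W → AlmostAdditiveAlong N 1 W) : AlmostAdditiveAlong N 1 C := by
  obtain ⟨n, l, W, hl, hl1, hW, rfl⟩ := hC
  rw [comboSet_eq_sum]
  exact (AlmostAdditiveAlong.sum _ fun i => (h _ (hW i)).smul (hl i)).mono
    (by simp [hl1]) subset_rfl

end Thickness

lemma one_le_toReal_of_ne_top {p : ENNReal} [Fact (1 ≤ p)] (hp : p ≠ ⊤) : 1 ≤ p.toReal :=
  (ENNReal.dichotomy p).resolve_left hp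

lemma exists_le_rpow_add_rpow_eq_one {a b q : ℝ} (ha : 0 ≤ a) (hq : 0 < q)
    (h : a ^ q + b ^ q ≤ 1) : ∃ r, a ≤ r ∧ r ^ q + b ^ q = 1 := by
  have haq : 0 ≤ a ^ q := Real.rpow_nonneg ha q
  refine ⟨(1 - b ^ q) ^ q⁻¹, (Real.le_rpow_inv_iff_of_pos ha (by linarith) hq).2 (by linarith), ?_⟩
  rw [Real.rpow_inv_rpow (by linarith) hq.ne', sub_add_cancel]

section LpNorm

variable {E F : Type*} [NormedAddCommGroup E] [NormedAddCommGroup F] {p : ENNReal} [Fact (1 ≤ p)]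

lemma norm_le_norm_fst_add_norm_snd (z : WithLp p (E × F)) : ‖z‖ ≤ ‖z.fst‖ + ‖z.snd‖ := by
  have hz : z = WithLp.toLp p (z.fst, 0) + WithLp.toLp p (0, z.snd) := by
    rw [← WithLp.toLp_add, Prod.mk_add_mk, add_zero, zero_add]
    rfl
  calc ‖z‖ ≤ ‖WithLp.toLp p (z.fst, (0 : F))‖ + ‖WithLp.toLp p ((0 : E), z.snd)‖ := by
        conv_lhs => rw [hz]
        exact norm_add_le _ _
    _ = ‖z.fst‖ + ‖z.snd‖ := by rw [WithLp.norm_toLp_fst, WithLp.norm_toLp_snd]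

lemma prod_norm_rpow_eq_add (hp : p ≠ ⊤) (z : WithLp p (E × F)) :
    ‖z‖ ^ p.toReal = ‖z.fst‖ ^ p.toReal + ‖z.snd‖ ^ p.toReal := by
  have hq : 0 < p.toReal := one_pos.trans_le (one_le_toReal_of_ne_top hp)
  rw [WithLp.prod_norm_eq_add hq, one_div, Real.rpow_inv_rpow (by positivity) hq.ne']

lemma prod_norm_le_rpow (hp : p ≠ ⊤) {z : WithLp p (E × F)} {a b : ℝ} (ha : ‖z.fst‖ ≤ a)
    (hb : ‖z.snd‖ ≤ b) : ‖z‖ ≤ (a ^ p.toReal + b ^ p.toReal) ^ (1 / p.toReal) := by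
  have hq : 0 < p.toReal := one_pos.trans_le (one_le_toReal_of_ne_top hp)
  rw [WithLp.prod_norm_eq_add hq]
  gcongr

lemma two_rpow_mul_add_le_two_mul_norm (hp : p ≠ ⊤) (z : WithLp p (E × F)) :
    2 ^ (1 / p.toReal) * (‖z.fst‖ + ‖z.snd‖) ≤ 2 * ‖z‖ := by
  have hq := one_le_toReal_of_ne_top hp
  have hq0 : 0 < p.toReal := one_pos.trans_le hq
  rw [← Real.rpow_le_rpow_iff (by positivity) (by positivity) hq0,
    Real.mul_rpow (by positivity) (by positivity), Real.mul_rpow (by positivity) (by positivity),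
    one_div, Real.rpow_inv_rpow zero_le_two hq0.ne', prod_norm_rpow_eq_add hp]
  have hconv : (‖z.fst‖ + ‖z.snd‖) ^ p.toReal ≤
      2 ^ (p.toReal - 1) * (‖z.fst‖ ^ p.toReal + ‖z.snd‖ ^ p.toReal) := by
    exact_mod_cast NNReal.rpow_add_le_mul_rpow_add_rpow ‖z.fst‖₊ ‖z.snd‖₊ hq
  calc 2 * (‖z.fst‖ + ‖z.snd‖) ^ p.toReal
      ≤ 2 * (2 ^ (p.toReal - 1) * (‖z.fst‖ ^ p.toReal + ‖z.snd‖ ^ p.toReal)) := by gcongr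
    _ = 2 ^ p.toReal * (‖z.fst‖ ^ p.toReal + ‖z.snd‖ ^ p.toReal) := by
        rw [Real.rpow_sub_one two_ne_zero]
        ring

end LpNorm

section LpSum

variable {X} {Y : Type*} [NormedAddCommGroup Y] [NormedSpace ℝ Y] {p : ENNReal} [Fact (1 ≤ p)]

lemma norm_comp_fstL (f : X →L[ℝ] ℝ) : ‖f.comp (WithLp.fstL p ℝ X Y)‖ = ‖f‖ := by
  refine le_antisymm ?_ ?_
  · refine ContinuousLinearMap.opNorm_le_bound _ (norm_nonneg f) fun z => ?_
    exact f.le_opNorm_of_le (WithLp.norm_fst_le ..)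
  · refine f.opNorm_le_bound (norm_nonneg _) fun x => ?_
    simpa using (f.comp (WithLp.fstL p ℝ X Y)).le_opNorm (WithLp.toLp p (x, 0))

lemma IsWeaklyOpen.exists_prod_subset {U : Set (WithLp p (X × Y))}
    (hU : IsWeaklyOpen (WithLp p (X × Y)) U) {w : WithLp p (X × Y)} (hw : w ∈ U) :
    ∃ (V₁ : Set X) (V₂ : Set Y), IsWeaklyOpen X V₁ ∧ IsWeaklyOpen Y V₂ ∧
      w.fst ∈ V₁ ∧ w.snd ∈ V₂ ∧ {z | z.fst ∈ V₁ ∧ z.snd ∈ V₂} ⊆ U := by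
  obtain ⟨V, hV, rfl⟩ := isWeaklyOpen_iff.1 hU
  let J := (WithLp.prodContinuousLinearEquiv p ℝ X Y).symm.toContinuousLinearMap
  let A : WeakSpace ℝ X × WeakSpace ℝ Y → WeakSpace ℝ (WithLp p (X × Y)) := fun z =>
    WeakSpace.map (J.comp (.inl ℝ X Y)) z.1 + WeakSpace.map (J.comp (.inr ℝ X Y)) z.2
  have hA : Continuous A := by fun_prop
  have hA_apply (z : WithLp p (X × Y)) :
      A (toWeakSpace ℝ X z.fst, toWeakSpace ℝ Y z.snd) = toWeakSpace ℝ _ z := by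
    change WithLp.toLp p (z.fst, (0 : Y)) + WithLp.toLp p ((0 : X), z.snd) = z
    rw [← WithLp.toLp_add, Prod.mk_add_mk, add_zero, zero_add]
    rfl
  obtain ⟨V₁, V₂, hV₁, hV₂, hw₁, hw₂, hsub⟩ := isOpen_prod_iff.1 (hV.preimage hA)
    (toWeakSpace ℝ X w.fst) (toWeakSpace ℝ Y w.snd)
    (by rwa [Set.mem_preimage, hA_apply])
  refine ⟨_, _, isWeaklyOpen_iff.2 ⟨V₁, hV₁, rfl⟩, isWeaklyOpen_iff.2 ⟨V₂, hV₂, rfl⟩, hw₁, hw₂,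
    fun z hz => ?_⟩
  have : A (toWeakSpace ℝ X z.fst, toWeakSpace ℝ Y z.snd) ∈ V := hsub (Set.mk_mem_prod hz.1 hz.2)
  rwa [hA_apply] at this

lemma sliceSet_comp_fstL_subset_closedBall (hp : p ≠ ⊤) {f : X →L[ℝ] ℝ} (hf : ‖f‖ ≤ 1) {y : Y}
    (hy : ‖y‖ ≤ 1) {s : ℝ} (hs : 0 ≤ s) :
    sliceSet (WithLp p (X × Y)) (f.comp (WithLp.fstL p ℝ X Y)) (1 - s) ⊆
      closedBall (WithLp.toLp p (0, y))
        ((1 + (1 + (1 - s ^ p.toReal) ^ p.toReal⁻¹) ^ p.toReal) ^ (1 / p.toReal)) := by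
  have hq : 0 < p.toReal := one_pos.trans_le (one_le_toReal_of_ne_top hp)
  rintro z ⟨hz_ball, hfz⟩
  have hz : ‖z‖ ≤ 1 := mem_closedBall_zero_iff.1 hz_ball
  have hfst_gt : s < ‖z.fst‖ :=
    calc s < f z.fst := by simpa using hfz
      _ ≤ 1 * ‖z.fst‖ := (le_abs_self _).trans (f.le_of_opNorm_le hf z.fst)
      _ = ‖z.fst‖ := one_mul _
  have hfst_rpow : s ^ p.toReal ≤ ‖z.fst‖ ^ p.toReal := by gcongr
  have hnorm_rpow : ‖z.fst‖ ^ p.toReal + ‖z.snd‖ ^ p.toReal ≤ 1 := by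
    rw [← prod_norm_rpow_eq_add hp]
    exact Real.rpow_le_one (norm_nonneg _) hz hq.le
  have hsnd_rpow : 0 ≤ ‖z.snd‖ ^ p.toReal := by positivity
  have hsnd : ‖z.snd‖ ≤ (1 - s ^ p.toReal) ^ p.toReal⁻¹ :=
    (Real.le_rpow_inv_iff_of_pos (norm_nonneg _) (by linarith) hq).2 (by linarith)
  have hfst_sub : ‖(z - WithLp.toLp p (0, y)).fst‖ ≤ 1 := by
    simpa using (WithLp.norm_fst_le ..).trans hz
  have hsnd_sub : ‖(z - WithLp.toLp p (0, y)).snd‖ ≤ 1 + (1 - s ^ p.toReal) ^ p.toReal⁻¹ := by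
    change ‖z.snd - y‖ ≤ _
    linarith [norm_sub_le z.snd y]
  rw [mem_closedBall_iff_norm]
  simpa using prod_norm_le_rpow hp hfst_sub hsnd_sub

variable [Nontrivial X] [Nontrivial Y]

-- Enlarging the first radius until the pair of radii lies on the unit sphere of `ℓ_p` makes their
-- sum at least `1`.
lemma IsRelWeakOpen.almostAdditiveAlong_norm_add_norm (hX : DaugavetProperty X)
    (hY : DaugavetProperty Y) (hp : p ≠ ⊤) {W : Set (WithLp p (X × Y))}
    (hW : IsRelWeakOpen (WithLp p (X × Y)) W) :
    AlmostAdditiveAlong (fun z : WithLp p (X × Y) => ‖z.fst‖ + ‖z.snd‖) 1 W := by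
  have hq := one_le_toReal_of_ne_top hp
  have hq0 : 0 < p.toReal := one_pos.trans_le hq
  obtain ⟨⟨w, hw⟩, U, hU, rfl⟩ := hW
  obtain ⟨V₁, V₂, hV₁, hV₂, hw₁, hw₂, hsub⟩ := hU.exists_prod_subset hw.2
  obtain ⟨r, hwr, hr⟩ : ∃ r, ‖w.fst‖ ≤ r ∧ r ^ p.toReal + ‖w.snd‖ ^ p.toReal = 1 := by
    refine exists_le_rpow_add_rpow_eq_one (norm_nonneg _) hq0 ?_
    rw [← prod_norm_rpow_eq_add hp]
    exact Real.rpow_le_one (norm_nonneg _) (mem_closedBall_zero_iff.1 hw.1) hq0.le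
  have hr_add : 1 ≤ r + ‖w.snd‖ := by
    simpa [hr] using Real.rpow_add_rpow_le_add ((norm_nonneg _).trans hwr) (norm_nonneg w.snd) hq
  refine ((hX.almostAdditiveAlong_closedBall_inter hV₁ hw₁ hwr).prod
    (hY.almostAdditiveAlong_closedBall_inter hV₂ hw₂ le_rfl)).mono hr_add ?_
  rintro z ⟨⟨hz₁, hzV₁⟩, hz₂, hzV₂⟩
  refine ⟨mem_closedBall_zero_iff.2 ?_, hsub ⟨hzV₁, hzV₂⟩⟩
  simpa [hr] using
    prod_norm_le_rpow hp (mem_closedBall_zero_iff.1 hz₁) (mem_closedBall_zero_iff.1 hz₂)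

lemma two_rpow_le_of_subset_closedBall (hX : DaugavetProperty X) (hY : DaugavetProperty Y)
    (hp : p ≠ ⊤) {C : Set (WithLp p (X × Y))} (hC : IsConvexComboRelWeakOpen _ C)
    {x : WithLp p (X × Y)} (hx : ‖x‖ = 1) {r : ℝ} (hsub : C ⊆ closedBall x r) :
    (2 : ℝ) ^ (1 / p.toReal) ≤ r := by
  have hadd := AlmostAdditiveAlong.of_isConvexComboRelWeakOpen hC fun _ hW =>
    hW.almostAdditiveAlong_norm_add_norm hX hY hp
  have hpow : (0 : ℝ) < 2 ^ (1 / p.toReal) := by positivity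
  suffices 2 ≤ 2 * r / 2 ^ (1 / p.toReal) by
    rw [le_div_iff₀ hpow] at this
    linarith
  refine le_of_forall_pos_le_add fun ε hε => ?_
  obtain ⟨u, huC, hu⟩ := hadd (-x) 1 zero_le_one ε hε
  have hx_sum : 1 ≤ ‖(-x).fst‖ + ‖(-x).snd‖ := by
    simpa [hx] using norm_le_norm_fst_add_norm_snd (-x)
  have hdist : ‖-x + (1 : ℝ) • u‖ ≤ r := by
    rw [one_smul, neg_add_eq_sub]
    exact mem_closedBall_iff_norm.1 (hsub huC)
  have hsum : ‖(-x + (1 : ℝ) • u).fst‖ + ‖(-x + (1 : ℝ) • u).snd‖ ≤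
      2 * r / 2 ^ (1 / p.toReal) := by
    rw [le_div_iff₀' hpow]
    exact (two_rpow_mul_add_le_two_mul_norm hp _).trans (by gcongr)
  linarith

-- The witnesses are slices given by functionals on `X` alone, with centers in the unit sphere of
-- `Y`: as the slices shrink, the second coordinates of their points tend to `0`.
lemma thickness_le_two_rpow (hp : p ≠ ⊤) {P : Set (WithLp p (X × Y)) → Prop}
    (hP : ∀ S, IsSlice _ S → P S) : thickness P ≤ (2 : ℝ) ^ (1 / p.toReal) := by
  have hq : 0 < p.toReal := one_pos.trans_le (one_le_toReal_of_ne_top hp)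
  obtain ⟨y, hy⟩ := exists_norm_eq Y zero_le_one
  obtain ⟨f, hf, -⟩ := exists_dual_vector' ℝ (0 : X)
  set R : ℝ → ℝ := fun s =>
    (1 + (1 + (1 - s ^ p.toReal) ^ p.toReal⁻¹) ^ p.toReal) ^ (1 / p.toReal) with hR
  have hR_cont : Continuous R := by fun_prop (disch := positivity)
  have hR_one : R 1 = 2 ^ (1 / p.toReal) := by
    simp [hR, hq.ne', one_add_one_eq_two]
  rw [← hR_one]
  refine ge_of_tendsto (hR_cont.continuousWithinAt (s := Iio 1) (x := 1)) ?_
  filter_upwards [Ioo_mem_nhdsLT zero_lt_one] with s hs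
  have hs_rpow : s ^ p.toReal ≤ 1 := Real.rpow_le_one hs.1.le hs.2.le hq.le
  have hR_pos : 0 < R s := by
    have := Real.rpow_nonneg (sub_nonneg.2 hs_rpow) p.toReal⁻¹
    positivity
  refine thickness_le (x := WithLp.toLp p (0, y)) hR_pos (by simpa using hy) (hP _ ?_)
    (sliceSet_comp_fstL_subset_closedBall hp hf.le hy.le hs.1.le)
  exact ⟨_, (norm_comp_fstL f).trans hf, 1 - s, sub_pos.2 hs.2, rfl⟩

lemma thickness_eq_two_rpow (hX : DaugavetProperty X) (hY : DaugavetProperty Y) (hp : p ≠ ⊤)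
    {P : Set (WithLp p (X × Y)) → Prop} (hslice : ∀ S, IsSlice _ S → P S)
    (hcombo : ∀ S, P S → IsConvexComboRelWeakOpen _ S) :
    thickness P = (2 : ℝ) ^ (1 / p.toReal) := by
  refine le_antisymm (thickness_le_two_rpow hp hslice) ?_
  obtain ⟨S, hS⟩ := exists_isSlice (WithLp p (X × Y))
  exact le_thickness (hslice S hS) hS.subset_closedBall fun x hx C hC r hsub =>
    two_rpow_le_of_subset_closedBall hX hY hp (hcombo C hC) hx hsub

end LpSum

theorem stmt_8_general (X Y : Type*) [NormedAddCommGroup X] [NormedSpace ℝ X] [Nontrivial X]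
    [NormedAddCommGroup Y] [NormedSpace ℝ Y] [Nontrivial Y]
    (p : ENNReal) [Fact (1 ≤ p)] (hp : p ≠ ⊤)
    (hX : DaugavetProperty X) (hY : DaugavetProperty Y) :
    Ts (WithLp p (X × Y)) = (2 : ℝ) ^ (1 / p.toReal) ∧
      Tw (WithLp p (X × Y)) = (2 : ℝ) ^ (1 / p.toReal) ∧
      Tcc (WithLp p (X × Y)) = (2 : ℝ) ^ (1 / p.toReal) := by
  refine ⟨thickness_eq_two_rpow hX hY hp (fun _ hS => hS) fun _ hS => ?_,
    thickness_eq_two_rpow hX hY hp (fun _ hS => hS.isRelWeakOpen) fun _ hW => ?_,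
    Tcc_eq_thickness.trans <| thickness_eq_two_rpow hX hY hp (fun _ hS => ?_) fun _ hC => hC⟩
  · exact hS.isRelWeakOpen.isConvexComboRelWeakOpen
  · exact hW.isConvexComboRelWeakOpen
  · exact hS.isRelWeakOpen.isConvexComboRelWeakOpen

theorem stmt_8 (X Y : Type*) [NormedAddCommGroup X] [NormedSpace ℝ X]
    [CompleteSpace X] [Nontrivial X] [NormedAddCommGroup Y] [NormedSpace ℝ Y]
    [CompleteSpace Y] [Nontrivial Y]
    (p : ENNReal) [Fact (1 ≤ p)] (hp : 1 < p) (hp' : p ≠ ⊤)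
    (hX : DaugavetProperty X) (hY : DaugavetProperty Y) :
    Ts (WithLp p (X × Y)) = (2 : ℝ) ^ (1 / p.toReal) ∧
      Tw (WithLp p (X × Y)) = (2 : ℝ) ^ (1 / p.toReal) ∧
      Tcc (WithLp p (X × Y)) = (2 : ℝ) ^ (1 / p.toReal) :=
  stmt_8_general X Y p hp' hX hY
end
end

section
/- Let X be a real Banach space. Then for every bounded linear operator T : X → X with ‖T‖ = 1 that is weakly compact, one has ‖T + I‖ ≥ max{𝒯^s(X), 𝒯^s_{w*}(X*)}, where I is the identity operator on X. -/
open Metric Set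

noncomputable section

variable (X : Type*) [NormedAddCommGroup X] [NormedSpace ℝ X]

/-- The weak-star Daugavet index of thickness `𝒯ˢ_{w*}(X*)` of the dual of `X`: the infimum of
all `r > 0` such that some weak-star slice of the closed unit ball of `X*` is contained in a
closed ball of radius `r` centered at a point of the unit sphere of `X*`. -/
def TsWStar : ℝ :=
  sInf {r : ℝ | 0 < r ∧ ∃ g : X →L[ℝ] ℝ, ‖g‖ = 1 ∧ ∃ x : X, ‖x‖ = 1 ∧ ∃ α > (0 : ℝ),
    {f : X →L[ℝ] ℝ | ‖f‖ ≤ 1 ∧ 1 - α < f x} ⊆ closedBall g r}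

/-!
Let `K` be the norm closure of `T(B_X)`, a weakly compact convex set not contained in a ball `C`
centred at `0` of radius slightly less than `1`. Such a `K` has a slice disjoint from `C` of
arbitrarily small diameter. If `K` is separable, cover it by countably many small balls: by Baire's
theorem in the weak closure of the extreme points of `K`, one of the balls contains all extreme
points lying in some slice, so `K` is the convex hull of the complement of that slice and a small
ball, and any thinner slice is small (the Namioka–Bourgain superlemma). The general case reduces to
the closed convex hull of a countable subset of `K`.

On the preimage of that slice, `T x` is close to a fixed `y` of norm close to `1`, so
`‖x + y‖ ≤ ‖T x + x‖ + ‖y - T x‖` is at most `‖T + I‖` up to a small error. This preimage is a slice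
of `B_X`, which bounds `𝒯ˢ(X)`. For `𝒯ˢ_{w*}(X*)`, apply the same to `T*`, which is weakly compact
by Gantmacher's theorem; since `T**` maps `X**` into `X`, the slice obtained is weak-star.
-/

lemma exists_isOpen_inter_subset_of_subset_iUnion {α ι : Type*} [TopologicalSpace α] [T2Space α]
    [Countable ι] {K P U : Set α} {B : ι → Set α} (hK : IsCompact K) (hPK : P ⊆ K) (hU : IsOpen U)
    (hPU : (P ∩ U).Nonempty) (hB : ∀ i, IsClosed (B i)) (hKB : K ⊆ ⋃ i, B i) :
    ∃ i, ∃ V ⊆ U, IsOpen V ∧ (P ∩ V).Nonempty ∧ P ∩ V ⊆ B i := by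
  obtain ⟨p, hpP, hpU⟩ := hPU
  have closure_subset : closure P ⊆ K := closure_minimal hPK hK.isClosed
  have : CompactSpace (closure P) :=
    isCompact_iff_compactSpace.1 (hK.of_isClosed_subset isClosed_closure closure_subset)
  have dense : Dense (⋃ i, interior (Subtype.val ⁻¹' B i : Set (closure P))) := by
    refine dense_iUnion_interior_of_closed (fun i => (hB i).preimage continuous_subtype_val) ?_
    rw [← preimage_iUnion, preimage_eq_univ_iff, Subtype.range_coe]
    exact closure_subset.trans hKB
  obtain ⟨q, hqU, hq⟩ := dense.inter_open_nonempty (Subtype.val ⁻¹' U)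
    (hU.preimage continuous_subtype_val) ⟨⟨p, subset_closure hpP⟩, hpU⟩
  obtain ⟨i, hqi⟩ := mem_iUnion.1 hq
  obtain ⟨V, hV, hVi⟩ := isOpen_induced_iff.1
    (isOpen_interior (s := (Subtype.val ⁻¹' B i : Set (closure P))))
  have hqV : (q : α) ∈ V := by rwa [← hVi] at hqi
  refine ⟨i, U ∩ V, inter_subset_left, hU.inter hV, ?_, fun x hx => ?_⟩
  · rw [inter_comm]
    exact mem_closure_iff.1 q.2 _ (hU.inter hV) ⟨hqU, hqV⟩
  · have mem_preimage : (⟨x, subset_closure hx.1⟩ : closure P) ∈ Subtype.val ⁻¹' V := hx.2.2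
    exact interior_subset (s := Subtype.val ⁻¹' B i) (hVi.subset mem_preimage)

section LocallyConvex

variable {E : Type*} [AddCommGroup E] [Module ℝ E] [TopologicalSpace E]

/-- The slice of `K` cut off by the functional `f` at level `b`. Unlike in `sliceSet`, `K` is an
arbitrary set and `f` is not normalised. -/
def sliceOf (K : Set E) (f : E →L[ℝ] ℝ) (b : ℝ) : Set E :=
  {x ∈ K | b < f x}

lemma sliceOf_smul (K : Set E) (f : E →L[ℝ] ℝ) (b : ℝ) {c : ℝ} (hc : 0 < c) :
    sliceOf K (c • f) (c * b) = sliceOf K f b := by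
  simp only [sliceOf, smul_apply, smul_eq_mul, mul_lt_mul_iff_right₀ hc]

lemma exists_mem_lt_of_mem_closedConvexHull {S : Set E} {x : E} (hx : x ∈ closedConvexHull ℝ S)
    {f : E →L[ℝ] ℝ} {b : ℝ} (hb : b < f x) : ∃ y ∈ S, b < f y := by
  by_contra! hle
  exact hb.not_ge (closedConvexHull_min hle (convex_halfSpace_le f.toLinearMap.isLinear b)
    (isClosed_le f.continuous continuous_const) hx)

variable [IsTopologicalAddGroup E] [ContinuousSMul ℝ E]

lemma isCompact_convexJoin {s t : Set E} (hs : IsCompact s) (ht : IsCompact t) :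
    IsCompact (convexJoin ℝ s t) := by
  have image_eq : (fun p : ℝ × E × E => (1 - p.1) • p.2.1 + p.1 • p.2.2) '' (Icc 0 1 ×ˢ s ×ˢ t) =
      convexJoin ℝ s t := by
    ext z
    simp only [mem_convexJoin, segment_eq_image, mem_image, Prod.exists, mem_prod]
    grind
  rw [← image_eq]
  exact (isCompact_Icc.prod (hs.prod ht)).image (by fun_prop)

lemma isCompact_convexHull_union {s t : Set E} (hs : IsCompact s) (hsc : Convex ℝ s)
    (ht : IsCompact t) (htc : Convex ℝ t) : IsCompact (convexHull ℝ (s ∪ t)) := by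
  rcases s.eq_empty_or_nonempty with rfl | hs₀
  · rwa [empty_union, htc.convexHull_eq]
  rcases t.eq_empty_or_nonempty with rfl | ht₀
  · rwa [union_empty, hsc.convexHull_eq]
  rw [hsc.convexHull_union htc hs₀ ht₀]
  exact isCompact_convexJoin hs ht

variable [LocallyConvexSpace ℝ E]

lemma mem_closedConvexHull_sdiff_of_forall_sliceOf_not_subset {K U : Set E} {x : E} (hx : x ∈ K)
    (h : ∀ f b, x ∈ sliceOf K f b → ¬ sliceOf K f b ⊆ U) : x ∈ closedConvexHull ℝ (K \ U) := by
  by_contra hxU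
  obtain ⟨f, b, hfb, hbx⟩ := geometric_hahn_banach_closed_point convex_closedConvexHull
    isClosed_closedConvexHull hxU
  obtain ⟨z, ⟨hzK, hbz⟩, hzU⟩ := not_subset.1 (h f b ⟨hx, hbx⟩)
  exact (hfb z (subset_closedConvexHull ⟨hzK, hzU⟩)).not_gt hbz

variable [T2Space E]

/-- **Milman's theorem**. -/
lemma notMem_closedConvexHull_of_mem_extremePoints {K F : Set E} (hK : IsCompact K)
    (hKc : Convex ℝ K) {e : E} (he : e ∈ K.extremePoints ℝ) (hF : IsClosed F) (hFK : F ⊆ K)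
    (heF : e ∉ F) : e ∉ closedConvexHull ℝ F := by
  have hull_subset (s : Set E) : closedConvexHull ℝ (K ∩ s) ⊆ K :=
    closedConvexHull_min inter_subset_left hKc hK.isClosed
  have hull_compact (s : Set E) : IsCompact (closedConvexHull ℝ (K ∩ s)) :=
    hK.of_isClosed_subset isClosed_closedConvexHull (hull_subset s)
  rw [← inter_eq_right.2 hFK]
  refine (hK.of_isClosed_subset hF hFK).induction_on
    (p := fun s => e ∉ closedConvexHull ℝ (K ∩ s)) ?empty ?mono ?union ?nhds
  case empty =>
    rw [inter_empty, closedConvexHull_eq_closure_convexHull, convexHull_empty, closure_empty]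
    exact notMem_empty e
  case mono =>
    exact fun s t hst ht hs => ht ((closedConvexHull ℝ).monotone (by gcongr) hs)
  case union =>
    intro s t hs ht hst
    have join_subset : convexHull ℝ (closedConvexHull ℝ (K ∩ s) ∪ closedConvexHull ℝ (K ∩ t)) ⊆
        K \ {e} :=
      convexHull_min (union_subset (subset_sdiff_singleton (hull_subset s) hs)
        (subset_sdiff_singleton (hull_subset t) ht)) (hKc.mem_extremePoints_iff_convex_sdiff.1 he).2
    refine (join_subset (closedConvexHull_min ?_ (convex_convexHull ℝ _) ?_ hst)).2 rfl
    · rw [inter_union_distrib_left]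
      exact (union_subset_union subset_closedConvexHull subset_closedConvexHull).trans
        (subset_convexHull ℝ _)
    · exact (isCompact_convexHull_union (hull_compact s) convex_closedConvexHull (hull_compact t)
        convex_closedConvexHull).isClosed
  case nhds =>
    intro x hxF
    obtain ⟨f, hf⟩ := geometric_hahn_banach_point_point (ne_of_mem_of_not_mem hxF heF)
    obtain ⟨c, hxc, hce⟩ := exists_between hf
    refine ⟨{y | f y < c}, mem_nhdsWithin_of_mem_nhds
      ((isOpen_lt f.continuous continuous_const).mem_nhds hxc), fun he' => ?_⟩
    obtain ⟨y, hy, hcy⟩ := exists_mem_lt_of_mem_closedConvexHull he' hce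
    exact hcy.not_gt hy.2

/-- **Choquet's lemma**. -/
lemma exists_mem_sliceOf_subset_of_mem_extremePoints {K U : Set E} (hK : IsCompact K)
    (hKc : Convex ℝ K) {e : E} (he : e ∈ K.extremePoints ℝ) (hU : IsOpen U) (heU : e ∈ U) :
    ∃ f b, e ∈ sliceOf K f b ∧ sliceOf K f b ⊆ U := by
  by_contra! h
  exact notMem_closedConvexHull_of_mem_extremePoints hK hKc he (hK.isClosed.sdiff hU)
    sdiff_subset (fun heK => heK.2 heU)
    (mem_closedConvexHull_sdiff_of_forall_sliceOf_not_subset he.1 h)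

lemma exists_sliceOf_disjoint_subset_convexHull {ι : Type*} [Countable ι] {K C : Set E}
    {B : ι → Set E} (hK : IsCompact K) (hKc : Convex ℝ K) (hC : IsClosed C) (hCc : Convex ℝ C)
    (hKC : ¬ K ⊆ C) (hB : ∀ i, IsClosed (B i)) (hBc : ∀ i, Convex ℝ (B i)) (hKB : K ⊆ ⋃ i, B i) :
    ∃ i f a, (sliceOf K f a).Nonempty ∧ Disjoint (sliceOf K f a) C ∧
      K ⊆ convexHull ℝ ({x ∈ K | f x ≤ a} ∪ K ∩ B i) := by
  have exists_extreme : (K.extremePoints ℝ ∩ Cᶜ).Nonempty := by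
    rw [inter_compl_nonempty_iff]
    intro hext
    apply hKC
    rw [← closure_convexHull_extremePoints hK hKc]
    exact closure_minimal (convexHull_min hext hCc) hC
  obtain ⟨i, V, hVC, hV, ⟨e, he, heV⟩, hVB⟩ := exists_isOpen_inter_subset_of_subset_iUnion hK
    extremePoints_subset hC.isOpen_compl exists_extreme hB hKB
  obtain ⟨f, a, hea, hfV⟩ := exists_mem_sliceOf_subset_of_mem_extremePoints hK hKc he hV heV
  refine ⟨i, f, a, ⟨e, hea⟩, disjoint_left.2 fun x hx => hVC (hfV hx), ?_⟩
  have hull_compact : IsCompact (convexHull ℝ ({x ∈ K | f x ≤ a} ∪ K ∩ B i)) :=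
    isCompact_convexHull_union (hK.inter_right (isClosed_le f.continuous continuous_const))
      (hKc.inter (convex_halfSpace_le f.toLinearMap.isLinear a))
      (hK.inter_right (hB i)) (hKc.inter (hBc i))
  have extremePoints_subset_union : K.extremePoints ℝ ⊆ {x ∈ K | f x ≤ a} ∪ K ∩ B i := by
    intro x hx
    rcases le_or_gt (f x) a with hle | hlt
    · exact Or.inl ⟨hx.1, hle⟩
    · exact Or.inr ⟨hx.1, hVB ⟨hx, hfV ⟨hx.1, hlt⟩⟩⟩
  conv_lhs => rw [← closure_convexHull_extremePoints hK hKc]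
  exact closure_minimal (convexHull_mono extremePoints_subset_union) hull_compact.isClosed

end LocallyConvex

section Dentability

variable {Y : Type*} [NormedAddCommGroup Y] [NormedSpace ℝ Y]

/-- Compactness of a subset of a normed space in the weak topology. -/
def IsWeaklyCompact (K : Set Y) : Prop :=
  IsCompact (toWeakSpace ℝ Y '' K)

lemma isClosed_toWeakSpace_image {C : Set Y} (hC : IsClosed C) (hCc : Convex ℝ C) :
    IsClosed (toWeakSpace ℝ Y '' C) := by
  rw [← hC.closure_eq, hCc.toWeakSpace_closure ℝ]
  exact isClosed_closure

instance : LocallyConvexSpace ℝ (WeakSpace ℝ Y) :=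
  WeakBilin.locallyConvexSpace (B := (topDualPairing ℝ Y).flip)

namespace IsWeaklyCompact

lemma isClosed {K : Set Y} (hK : IsWeaklyCompact K) : IsClosed K := by
  rw [← preimage_image_eq K (toWeakSpace ℝ Y).injective]
  exact (IsCompact.isClosed hK).preimage (toWeakSpaceCLM ℝ Y).continuous

lemma of_isClosed_convex_subset {K L : Set Y} (hK : IsWeaklyCompact K) (hL : IsClosed L)
    (hLc : Convex ℝ L) (hLK : L ⊆ K) : IsWeaklyCompact L :=
  IsCompact.of_isClosed_subset hK (isClosed_toWeakSpace_image hL hLc) (image_mono hLK)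

lemma isBounded {K : Set Y} (hK : IsWeaklyCompact K) : Bornology.IsBounded K := by
  have pointwise_bounded (f : StrongDual ℝ Y) :
      ∃ C, ∀ x : K, ‖NormedSpace.inclusionInDoubleDual ℝ Y x f‖ ≤ C := by
    obtain ⟨C, hC⟩ := IsCompact.exists_bound_of_continuousOn hK
      (WeakBilin.eval_continuous (topDualPairing ℝ Y).flip f).continuousOn
    exact ⟨C, fun x => hC _ (mem_image_of_mem _ x.2)⟩
  obtain ⟨C, hC⟩ := banach_steinhaus pointwise_bounded
  refine isBounded_iff_forall_norm_le.2 ⟨C, fun x hx => ?_⟩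
  rw [← (NormedSpace.inclusionInDoubleDualLi ℝ).norm_map x]
  exact hC ⟨x, hx⟩

lemma exists_sliceOf_disjoint_subset_convexHull {ι : Type*} [Countable ι] {K C : Set Y}
    {B : ι → Set Y} (hK : IsWeaklyCompact K) (hKc : Convex ℝ K) (hC : IsClosed C)
    (hCc : Convex ℝ C) (hKC : ¬ K ⊆ C) (hB : ∀ i, IsClosed (B i)) (hBc : ∀ i, Convex ℝ (B i))
    (hKB : K ⊆ ⋃ i, B i) :
    ∃ i f a, (sliceOf K f a).Nonempty ∧ Disjoint (sliceOf K f a) C ∧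
      K ⊆ convexHull ℝ ({x ∈ K | f x ≤ a} ∪ K ∩ B i) := by
  let w := toWeakSpace ℝ Y
  obtain ⟨i, g, a, ⟨_, ⟨x₀, hx₀, rfl⟩, hax₀⟩, hdisj, hhull⟩ :=
    _root_.exists_sliceOf_disjoint_subset_convexHull (K := w '' K) (C := w '' C)
      (B := fun i => w '' B i) hK (hKc.linear_image w.toLinearMap)
      (isClosed_toWeakSpace_image hC hCc) (hCc.linear_image w.toLinearMap)
      (by rwa [image_subset_image_iff w.injective])
      (fun i => isClosed_toWeakSpace_image (hB i) (hBc i))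
      (fun i => (hBc i).linear_image w.toLinearMap)
      (by rw [← image_iUnion]; exact image_mono hKB)
  refine ⟨i, g.comp (toWeakSpaceCLM ℝ Y), a, ⟨x₀, hx₀, hax₀⟩, disjoint_left.2 fun x hx hxC =>
    disjoint_left.1 hdisj ⟨mem_image_of_mem w hx.1, hx.2⟩ (mem_image_of_mem w hxC), fun x hx => ?_⟩
  have image_eq : {y ∈ w '' K | g y ≤ a} ∪ w '' K ∩ w '' B i =
      w '' ({x ∈ K | g.comp (toWeakSpaceCLM ℝ Y) x ≤ a} ∪ K ∩ B i) := by
    rw [image_union, image_inter w.injective]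
    congr 1
    ext y
    constructor
    · rintro ⟨⟨x, hx, rfl⟩, hxa⟩
      exact ⟨x, ⟨hx, hxa⟩, rfl⟩
    · rintro ⟨x, ⟨hx, hxa⟩, rfl⟩
      exact ⟨⟨x, hx, rfl⟩, hxa⟩
  have hwx := hhull (mem_image_of_mem w hx)
  rw [image_eq] at hwx
  rwa [← w.injective.mem_set_image, ← w.coe_toLinearMap, LinearMap.image_convexHull]

end IsWeaklyCompact

/-- A point of `conv (A ∪ B)` at which `f` is nearly maximal carries little weight in `A`. -/
lemma exists_norm_sub_le_of_mem_convexHull_union {A B : Set Y} (hA : Convex ℝ A) (hB : Convex ℝ B)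
    {f : Y →L[ℝ] ℝ} {a m r D : ℝ} (hfA : ∀ x ∈ A, f x ≤ a) (hfB : ∀ y ∈ B, f y ≤ m) (ham : a ≤ m)
    (hr₀ : 0 ≤ r) (hr₁ : r ≤ 1) (hD₀ : 0 ≤ D) (hD : ∀ x ∈ A, ∀ y ∈ B, ‖x - y‖ ≤ D) {z : Y}
    (hz : z ∈ convexHull ℝ (A ∪ B)) (hfz : r * a + (1 - r) * m < f z) :
    ∃ y ∈ B, ‖z - y‖ ≤ r * D := by
  rcases A.eq_empty_or_nonempty with rfl | hA₀
  · rw [empty_union, hB.convexHull_eq] at hz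
    exact ⟨z, hz, by rw [sub_self, norm_zero]; positivity⟩
  rcases B.eq_empty_or_nonempty with rfl | hB₀
  · rw [union_empty, hA.convexHull_eq] at hz
    nlinarith [hfA z hz]
  rw [hA.convexHull_union hB hA₀ hB₀, mem_convexJoin] at hz
  obtain ⟨x, hx, y, hy, s, t, hs, ht, hst, rfl⟩ := hz
  obtain rfl : t = 1 - s := by linarith
  have weight_le : s ≤ r := by
    by_contra! hrs
    refine hfz.not_ge ?_
    calc f (s • x + (1 - s) • y) = s * f x + (1 - s) * f y := by simp
      _ ≤ s * a + (1 - s) * m := by gcongr; exacts [hfA x hx, hfB y hy]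
      _ ≤ r * a + (1 - r) * m := by nlinarith
  refine ⟨y, hy, ?_⟩
  calc ‖s • x + (1 - s) • y - y‖ = ‖s • (x - y)‖ := by congr 1; module
    _ = s * ‖x - y‖ := by rw [norm_smul, Real.norm_of_nonneg hs]
    _ ≤ r * D := by gcongr; exact hD x hx y hy

lemma exists_sliceOf_forall_exists_dist_le {K L : Set Y} (hK : Bornology.IsBounded K)
    (hKc : Convex ℝ K) (hLK : L ⊆ K) (hL : Convex ℝ L) {f : Y →L[ℝ] ℝ} {a : ℝ}
    (hne : (sliceOf K f a).Nonempty) (hhull : K ⊆ convexHull ℝ ({x ∈ K | f x ≤ a} ∪ L)) {ε : ℝ}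
    (hε : 0 < ε) :
    ∃ b ≥ a, (sliceOf K f b).Nonempty ∧ ∀ x ∈ sliceOf K f b, ∃ y ∈ L, dist x y ≤ ε := by
  obtain ⟨x₀, hx₀, hax₀⟩ := hne
  obtain ⟨D, hD⟩ := isBounded_iff.1 hK
  have hD₀ : 0 ≤ D := dist_nonneg.trans (hD hx₀ hx₀)
  have bddAbove : BddAbove (f '' K) := (f.lipschitz.isBounded_image hK).bddAbove
  set m := sSup (f '' K)
  have le_m (x : Y) (hx : x ∈ K) : f x ≤ m := le_csSup bddAbove (mem_image_of_mem f hx)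
  have ham : a < m := hax₀.trans_le (le_m x₀ hx₀)
  obtain ⟨r, hr₀, hr₁, hrD⟩ : ∃ r : ℝ, 0 < r ∧ r ≤ 1 ∧ r * D ≤ ε := by
    refine ⟨min 1 (ε / (D + 1)), by positivity, min_le_left _ _, ?_⟩
    calc min 1 (ε / (D + 1)) * D ≤ ε / (D + 1) * (D + 1) := by
          gcongr
          · exact min_le_right _ _
          · linarith
      _ = ε := by field_simp
  obtain ⟨_, ⟨x₁, hx₁, rfl⟩, hbx₁⟩ := exists_lt_of_lt_csSup ⟨f x₀, mem_image_of_mem f hx₀⟩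
    (show r * a + (1 - r) * m < m by nlinarith)
  refine ⟨r * a + (1 - r) * m, by nlinarith, ⟨x₁, hx₁, hbx₁⟩, fun x ⟨hx, hbx⟩ => ?_⟩
  obtain ⟨y, hy, hxy⟩ := exists_norm_sub_le_of_mem_convexHull_union
    (hKc.inter (convex_halfSpace_le f.toLinearMap.isLinear a)) hL (fun x hx => hx.2)
    (fun y hy => le_m y (hLK hy)) ham.le hr₀.le hr₁ hD₀
    (fun x hx y hy => dist_eq_norm x y ▸ hD hx.1 (hLK hy)) (hhull hx) hbx
  exact ⟨y, hy, (dist_eq_norm x y).trans_le (hxy.trans hrD)⟩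

lemma IsWeaklyCompact.exists_sliceOf_subset_of_isSeparable {K C : Set Y} (hK : IsWeaklyCompact K)
    (hKc : Convex ℝ K) (hKs : TopologicalSpace.IsSeparable K) (hC : IsClosed C) (hCc : Convex ℝ C)
    (hKC : ¬ K ⊆ C) {ε : ℝ} (hε : 0 < ε) :
    ∃ f b c, (sliceOf K f b).Nonempty ∧ sliceOf K f b ⊆ closedBall c ε \ C := by
  obtain ⟨s, hs, hKs⟩ := hKs
  have := hs.to_subtype
  have cover : K ⊆ ⋃ c : s, closedBall (c : Y) (ε / 2) := by
    intro x hx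
    obtain ⟨y, hy, hxy⟩ := Metric.mem_closure_iff.1 (hKs hx) (ε / 2) (half_pos hε)
    exact mem_iUnion.2 ⟨⟨y, hy⟩, hxy.le⟩
  obtain ⟨c, f, a, hne, hdisj, hhull⟩ :=
    hK.exists_sliceOf_disjoint_subset_convexHull (B := fun c : s => closedBall (c : Y) (ε / 2))
      hKc hC hCc hKC (fun _ => isClosed_closedBall)
      (fun c => convex_closedBall (c : Y) (ε / 2)) cover
  obtain ⟨b, hab, hne, hnear⟩ := exists_sliceOf_forall_exists_dist_le hK.isBounded hKc
    inter_subset_left (hKc.inter (convex_closedBall _ _)) hne hhull (half_pos hε)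
  refine ⟨f, b, c, hne, fun x hx => ⟨?_, disjoint_left.1 hdisj ⟨hx.1, hab.trans_lt hx.2⟩⟩⟩
  obtain ⟨y, hy, hxy⟩ := hnear x hx
  calc dist x c ≤ dist x y + dist y c := dist_triangle x y c
    _ ≤ ε / 2 + ε / 2 := add_le_add hxy hy.2
    _ = ε := add_halves ε

lemma exists_countable_subset_mem_closedConvexHull {S : Set Y} {x : Y}
    (hx : x ∈ closedConvexHull ℝ S) :
    ∃ D ⊆ S, D.Countable ∧ x ∈ closedConvexHull ℝ D := by
  rw [closedConvexHull_eq_closure_convexHull] at hx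
  obtain ⟨u, hu, hux⟩ := mem_closure_iff_seq_limit.1 hx
  have finite_support (n : ℕ) :
      ∃ t : Finset Y, (t : Set Y) ⊆ S ∧ u n ∈ convexHull ℝ (t : Set Y) := by
    have hun := hu n
    rw [convexHull_eq_union_convexHull_finite_subsets] at hun
    simpa only [mem_iUnion, exists_prop] using hun
  choose t htS hut using finite_support
  refine ⟨⋃ n, (t n : Set Y), iUnion_subset htS,
    countable_iUnion fun n => (t n).countable_toSet, ?_⟩
  rw [closedConvexHull_eq_closure_convexHull]
  exact mem_closure_of_tendsto hux (.of_forall fun n =>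
    convexHull_mono (subset_iUnion (fun n => (t n : Set Y)) n) (hut n))

lemma exists_countable_superset_biUnion_subset {α : Type*} {K A₀ : Set α} {D : α → Set α}
    (hA₀ : A₀.Countable) (hA₀K : A₀ ⊆ K) (hD : ∀ x ∈ K, (D x).Countable)
    (hDK : ∀ x ∈ K, D x ⊆ K) :
    ∃ A ⊆ K, A₀ ⊆ A ∧ A.Countable ∧ ⋃ x ∈ A, D x ⊆ A := by
  let stage (n : ℕ) : Set α := (fun s => ⋃ x ∈ s, D x)^[n] A₀
  have stage_succ (n : ℕ) : stage (n + 1) = ⋃ x ∈ stage n, D x :=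
    Function.iterate_succ_apply' _ n A₀
  have stage_countable (n : ℕ) : stage n ⊆ K ∧ (stage n).Countable := by
    induction n with
    | zero => exact ⟨hA₀K, hA₀⟩
    | succ n ih =>
      rw [stage_succ]
      exact ⟨iUnion₂_subset fun x hx => hDK x (ih.1 hx), ih.2.biUnion fun x hx => hD x (ih.1 hx)⟩
  refine ⟨⋃ n, stage n, iUnion_subset fun n => (stage_countable n).1, subset_iUnion stage 0,
    countable_iUnion fun n => (stage_countable n).2, iUnion₂_subset fun x hx => ?_⟩
  obtain ⟨n, hn⟩ := mem_iUnion.1 hx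
  calc D x ⊆ stage (n + 1) := stage_succ n ▸ subset_biUnion_of_mem (u := D) hn
    _ ⊆ ⋃ n, stage n := subset_iUnion stage (n + 1)

lemma isSeparable_closedConvexHull_of_countable {A : Set Y} (hA : A.Countable) :
    TopologicalSpace.IsSeparable (closedConvexHull ℝ A) := by
  rw [closedConvexHull_eq_closure_convexHull]
  exact (hA.isSeparable.span (R := ℝ)).closure.mono
    (closure_mono (convexHull_min Submodule.subset_span (Submodule.convex _)))

lemma IsWeaklyCompact.exists_sliceOf_subset_closedBall_sdiff {K C : Set Y}
    (hK : IsWeaklyCompact K) (hKc : Convex ℝ K) (hC : IsClosed C) (hCc : Convex ℝ C)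
    (hKC : ¬ K ⊆ C) {ε : ℝ} (hε : 0 < ε) :
    ∃ f b, ∃ y ∈ sliceOf K f b, sliceOf K f b ⊆ closedBall y ε \ C := by
  -- Otherwise every `x ∈ K` is a limit of convex combinations of a countable `D x ⊆ K` avoiding
  -- `closedBall x ε \ C`; a countable `A` with `D x ⊆ A` for all `x ∈ A` then contradicts the
  -- separable case.
  by_contra! no_slice
  have exists_countable (x : Y) (hx : x ∈ K) :
      ∃ D ⊆ K \ (closedBall x ε \ C), D.Countable ∧ x ∈ closedConvexHull ℝ D :=
    exists_countable_subset_mem_closedConvexHull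
      (mem_closedConvexHull_sdiff_of_forall_sliceOf_not_subset hx fun f b => no_slice f b x)
  choose! D hDK hD hxD using exists_countable
  obtain ⟨x₀, hx₀K, hx₀C⟩ := not_subset.1 hKC
  obtain ⟨A, hAK, hx₀A, hA, hDA⟩ := exists_countable_superset_biUnion_subset
    (countable_singleton x₀) (singleton_subset_iff.2 hx₀K) hD
    fun x hx => (hDK x hx).trans sdiff_subset
  have hull_weaklyCompact : IsWeaklyCompact (closedConvexHull ℝ A) :=
    hK.of_isClosed_convex_subset isClosed_closedConvexHull convex_closedConvexHull
      (closedConvexHull_min hAK hKc hK.isClosed)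
  obtain ⟨f, b, c, ⟨x₁, hx₁, hbx₁⟩, hslice⟩ :=
    hull_weaklyCompact.exists_sliceOf_subset_of_isSeparable convex_closedConvexHull
      (isSeparable_closedConvexHull_of_countable hA) hC hCc
      (fun h => hx₀C (h (subset_closedConvexHull (hx₀A rfl)))) (half_pos hε)
  obtain ⟨y, hyA, hby⟩ := exists_mem_lt_of_mem_closedConvexHull hx₁ hbx₁
  obtain ⟨z, hzD, hbz⟩ := exists_mem_lt_of_mem_closedConvexHull (hxD y (hAK hyA)) hby
  have hzA : z ∈ A := hDA (mem_biUnion hyA hzD)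
  have hyc := (hslice ⟨subset_closedConvexHull hyA, hby⟩).1
  have hzc := hslice ⟨subset_closedConvexHull hzA, hbz⟩
  refine (hDK y (hAK hyA) hzD).2 ⟨?_, hzc.2⟩
  calc dist z y ≤ dist z c + dist y c := dist_triangle_right z y c
    _ ≤ ε / 2 + ε / 2 := add_le_add hzc.1 hyc
    _ = ε := add_halves ε

end Dentability

section Operators

set_option maxSynthPendingDepth 3

variable {Y Z : Type*} [NormedAddCommGroup Y] [NormedSpace ℝ Y] [NormedAddCommGroup Z]
  [NormedSpace ℝ Z]

/-- An operator is weakly compact if it maps the closed unit ball to a relatively weakly compact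
set. -/
def IsWeaklyCompactOperator (T : Y →L[ℝ] Z) : Prop :=
  IsCompact (closure (toWeakSpace ℝ Z '' (T '' closedBall 0 1)))

lemma convex_image_closedBall (T : Y →L[ℝ] Z) : Convex ℝ (T '' closedBall 0 1) :=
  (convex_closedBall 0 1).linear_image T.toLinearMap

lemma image_closedBall_subset_closedBall_iff {T : Y →L[ℝ] Z} {r : ℝ} :
    T '' closedBall 0 1 ⊆ closedBall 0 r ↔ ‖T‖ ≤ r := by
  constructor
  · intro h
    by_contra! hr
    obtain ⟨x, hx, hrx⟩ := T.exists_lt_apply_of_lt_opNorm hr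
    exact hrx.not_ge (by simpa using h (mem_image_of_mem T (by simpa using hx.le)))
  · rintro h _ ⟨x, hx, rfl⟩
    simpa using T.le_of_opNorm_le_of_le h (mem_closedBall_zero_iff.1 hx)

lemma norm_le_of_forall_apply_le {f : Y →L[ℝ] ℝ} {u : ℝ} (h : ∀ x ∈ closedBall 0 1, f x ≤ u) :
    ‖f‖ ≤ u := by
  have hu : 0 ≤ u := by simpa using h 0 (by simp)
  refine ContinuousLinearMap.opNorm_le_of_unit_norm hu fun x hx => abs_le'.2 ⟨?_, ?_⟩
  · exact h x (by simp [hx])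
  · rw [← map_neg]
    exact h (-x) (by simp [hx])

lemma norm_normalize_sub_self {x : Y} (hx : x ≠ 0) :
    ‖NormedSpace.normalize x - x‖ = |1 - ‖x‖| := by
  have sub_eq : NormedSpace.normalize x - x = (1 - ‖x‖) • NormedSpace.normalize x := by
    rw [sub_smul, one_smul, NormedSpace.norm_smul_normalize]
  rw [sub_eq, norm_smul, NormedSpace.norm_normalize_eq_one_iff.2 hx, mul_one, Real.norm_eq_abs]

lemma norm_precomp (T : Y →L[ℝ] Z) :
    ‖(ContinuousLinearMap.precomp ℝ T : StrongDual ℝ Z →L[ℝ] StrongDual ℝ Y)‖ = ‖T‖ := by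
  let R : StrongDual ℝ Z →L[ℝ] StrongDual ℝ Y := ContinuousLinearMap.precomp ℝ T
  refine le_antisymm (R.opNorm_le_bound (norm_nonneg T) fun f => ?_)
    (T.opNorm_le_bound (norm_nonneg R) fun x => ?_)
  · rw [mul_comm]
    exact f.opNorm_comp_le T
  · obtain ⟨g, hg, hgx⟩ := exists_dual_vector'' ℝ (T x)
    calc ‖T x‖ = R g x := hgx.symm
      _ ≤ ‖R g‖ * ‖x‖ := (le_abs_self _).trans ((R g).le_opNorm x)
      _ ≤ ‖R‖ * ‖x‖ := by
        gcongr
        simpa using R.le_of_opNorm_le_of_le le_rfl hg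

lemma norm_precomp_add_id (T : Y →L[ℝ] Y) :
    ‖(ContinuousLinearMap.precomp ℝ T : StrongDual ℝ Y →L[ℝ] StrongDual ℝ Y) +
      ContinuousLinearMap.id ℝ (StrongDual ℝ Y)‖ = ‖T + ContinuousLinearMap.id ℝ Y‖ := by
  rw [← norm_precomp (T + ContinuousLinearMap.id ℝ Y)]
  congr 1
  ext f x
  exact (map_add f (T x) x).symm

lemma IsWeaklyCompact.exists_inclusionInDoubleDual_eq {C : Set Y} (hC : IsWeaklyCompact C)
    (hCc : Convex ℝ C) {φ : StrongDual ℝ (StrongDual ℝ Y)}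
    (h : ∀ (f : StrongDual ℝ Y) (u : ℝ), (∀ x ∈ C, f x ≤ u) → φ f ≤ u) :
    ∃ x ∈ C, NormedSpace.inclusionInDoubleDual ℝ Y x = φ := by
  have : LocallyConvexSpace ℝ (WeakDual ℝ (StrongDual ℝ Y)) :=
    WeakBilin.locallyConvexSpace (B := topDualPairing ℝ (StrongDual ℝ Y))
  let J := NormedSpace.inclusionInDoubleDualWeak ℝ Y
  let w := toWeakSpace ℝ Y
  suffices hφ : StrongDual.toWeakDual φ ∈ J '' (w '' C) by
    obtain ⟨_, ⟨x, hx, rfl⟩, hxφ⟩ := hφ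
    exact ⟨x, hx, hxφ⟩
  by_contra hφ
  obtain ⟨L, u, hLu, huL⟩ := geometric_hahn_banach_closed_point
    ((hCc.linear_image w.toLinearMap).linear_image J.toLinearMap)
    (IsCompact.image hC J.continuous).isClosed hφ
  obtain ⟨f, rfl⟩ := LinearMap.dualEmbedding_surjective (topDualPairing ℝ (StrongDual ℝ Y)) L
  exact huL.not_ge (h f u fun x hx =>
    (hLu _ (mem_image_of_mem J (mem_image_of_mem w hx))).le)

namespace IsWeaklyCompactOperator

lemma isWeaklyCompact_closure_image {T : Y →L[ℝ] Z} (hT : IsWeaklyCompactOperator T) :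
    IsWeaklyCompact (closure (T '' closedBall 0 1)) := by
  rwa [IsWeaklyCompact, (convex_image_closedBall T).toWeakSpace_closure ℝ]

lemma exists_comp_precomp_eq_inclusionInDoubleDual {T : Y →L[ℝ] Z}
    (hT : IsWeaklyCompactOperator T) (F : StrongDual ℝ (StrongDual ℝ Y)) :
    ∃ z, F.comp (ContinuousLinearMap.precomp ℝ T) = NormedSpace.inclusionInDoubleDual ℝ Z z := by
  let G := NormedSpace.normalize F
  have hG : ‖G‖ ≤ 1 := by
    rcases eq_or_ne F 0 with rfl | hF
    · simp only [G, NormedSpace.normalize_zero_eq_zero, norm_zero, zero_le_one]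
    · exact (NormedSpace.norm_normalize_eq_one_iff.2 hF).le
  obtain ⟨z, -, hz⟩ := hT.isWeaklyCompact_closure_image.exists_inclusionInDoubleDual_eq
    (convex_image_closedBall T).closure
    (φ := G.comp (ContinuousLinearMap.precomp ℝ T)) fun f u hfu => by
      have norm_comp_le : ‖f.comp T‖ ≤ u := norm_le_of_forall_apply_le fun x hx =>
        hfu _ (subset_closure (mem_image_of_mem T hx))
      calc G (f.comp T) ≤ ‖G (f.comp T)‖ := le_abs_self _
        _ ≤ 1 * ‖f.comp T‖ := G.le_of_opNorm_le hG _
        _ ≤ u := by rwa [one_mul]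
  refine ⟨‖F‖ • z, ?_⟩
  rw [map_smul, hz, ← ContinuousLinearMap.smul_comp, NormedSpace.norm_smul_normalize]

/-- **Gantmacher's theorem**. -/
lemma precomp {T : Y →L[ℝ] Z} (hT : IsWeaklyCompactOperator T) :
    IsWeaklyCompactOperator
      (ContinuousLinearMap.precomp ℝ T : StrongDual ℝ Z →L[ℝ] StrongDual ℝ Y) := by
  let Φ : WeakDual ℝ Z → WeakSpace ℝ (StrongDual ℝ Y) := fun φ =>
    toWeakSpace ℝ (StrongDual ℝ Y) (ContinuousLinearMap.precomp ℝ T (WeakDual.toStrongDual φ))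
  have continuous_Φ : Continuous Φ := by
    refine WeakBilin.continuous_of_continuous_eval _ fun F => ?_
    obtain ⟨z, hz⟩ := hT.exists_comp_precomp_eq_inclusionInDoubleDual F
    exact (WeakDual.eval_continuous z).congr fun φ =>
      (DFunLike.congr_fun hz (WeakDual.toStrongDual φ)).symm
  have image_eq : Φ '' (WeakDual.toStrongDual ⁻¹' closedBall (0 : StrongDual ℝ Z) 1) =
      toWeakSpace ℝ (StrongDual ℝ Y) '' ((ContinuousLinearMap.precomp ℝ T :
        StrongDual ℝ Z →L[ℝ] StrongDual ℝ Y) '' closedBall 0 1) := by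
    rw [image_image]
    rfl
  have image_compact := (WeakDual.isCompact_closedBall (0 : StrongDual ℝ Z) 1).image continuous_Φ
  rw [image_eq] at image_compact
  exact image_compact.closure

lemma exists_sliceOf_mapsTo_closedBall {T : Y →L[ℝ] Z} (hT : IsWeaklyCompactOperator T)
    (hT₁ : ‖T‖ = 1) {ε : ℝ} (hε : 0 < ε) :
    ∃ (y : Z) (f : Z →L[ℝ] ℝ) (b : ℝ), ‖y‖ = 1 ∧ f.comp T ≠ 0 ∧
      (sliceOf (closedBall 0 1) (f.comp T) b).Nonempty ∧
      MapsTo T (sliceOf (closedBall 0 1) (f.comp T) b) (closedBall y ε) := by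
  let K := closure (T '' closedBall 0 1)
  have map_mem {x : Y} (hx : x ∈ closedBall 0 1) : T x ∈ K :=
    subset_closure (mem_image_of_mem T hx)
  have K_subset : K ⊆ closedBall 0 1 :=
    closure_minimal (image_closedBall_subset_closedBall_iff.2 hT₁.le) isClosed_closedBall
  obtain ⟨ρ, hρ₀, hρε, hρ₁⟩ : ∃ ρ : ℝ, 0 ≤ ρ ∧ 1 - ε / 2 ≤ ρ ∧ ρ < 1 :=
    ⟨max 0 (1 - ε / 2), le_max_left _ _, le_max_right _ _, max_lt one_pos (by linarith)⟩
  have not_subset : ¬ K ⊆ closedBall 0 ρ := fun hK => (hρ₁.trans_eq hT₁.symm).not_ge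
    (image_closedBall_subset_closedBall_iff.1 (subset_closure.trans hK))
  obtain ⟨f, b, y, ⟨hyK, hby⟩, hslice⟩ :=
    hT.isWeaklyCompact_closure_image.exists_sliceOf_subset_closedBall_sdiff
      (convex_image_closedBall T).closure isClosed_closedBall (convex_closedBall 0 ρ)
      not_subset (half_pos hε)
  have norm_le : ‖y‖ ≤ 1 := by simpa using K_subset hyK
  have lt_norm : ρ < ‖y‖ := by simpa using (hslice ⟨hyK, hby⟩).2
  have hy : y ≠ 0 := norm_pos_iff.1 (hρ₀.trans_lt lt_norm)
  obtain ⟨_, hbx, x, hx, rfl⟩ := mem_closure_iff.1 hyK _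
    (isOpen_lt continuous_const f.continuous) hby
  refine ⟨NormedSpace.normalize y, f, b, NormedSpace.norm_normalize_eq_one_iff.2 hy, ?_,
    ⟨x, hx, hbx⟩, fun z ⟨hz, hbz⟩ => ?_⟩
  · intro comp_eq_zero
    have hb : b < 0 := by simpa [comp_eq_zero] using show b < f.comp T x from hbx
    have zero_mem : (0 : Z) ∈ K := by simpa using map_mem (x := 0) (by simp)
    exact (hslice ⟨zero_mem, by simpa using hb⟩).2 (by simpa using hρ₀)
  · have hTz := (hslice ⟨map_mem hz, hbz⟩).1
    have dist_normalize : dist y (NormedSpace.normalize y) ≤ ε / 2 := by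
      rw [dist_comm, dist_eq_norm, norm_normalize_sub_self hy, abs_of_nonneg (by linarith)]
      linarith
    calc dist (T z) (NormedSpace.normalize y) ≤ dist (T z) y + dist y (NormedSpace.normalize y) :=
          dist_triangle _ _ _
      _ ≤ ε / 2 + ε / 2 := add_le_add hTz dist_normalize
      _ = ε := add_halves ε

lemma exists_sliceOf_subset_closedBall_norm_add_id {T : Y →L[ℝ] Y}
    (hT : IsWeaklyCompactOperator T) (hT₁ : ‖T‖ = 1) {ε : ℝ} (hε : 0 < ε) :
    ∃ (y : Y) (f : Y →L[ℝ] ℝ) (b : ℝ), ‖y‖ = 1 ∧ f.comp T ≠ 0 ∧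
      (sliceOf (closedBall 0 1) (f.comp T) b).Nonempty ∧
      sliceOf (closedBall 0 1) (f.comp T) b ⊆
        closedBall y (‖T + ContinuousLinearMap.id ℝ Y‖ + ε) := by
  obtain ⟨y, f, b, hy, hf, hne, hmaps⟩ := hT.exists_sliceOf_mapsTo_closedBall hT₁ hε
  refine ⟨-y, f, b, by rwa [norm_neg], hf, hne, fun x hx => ?_⟩
  rw [mem_closedBall_iff_norm, sub_neg_eq_add]
  calc ‖x + y‖ = ‖(T x + x) - (T x - y)‖ := by congr 1; abel
    _ ≤ ‖T x + x‖ + ‖T x - y‖ := norm_sub_le _ _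
    _ ≤ ‖T + ContinuousLinearMap.id ℝ Y‖ + ε := by
      gcongr
      · simpa using (T + ContinuousLinearMap.id ℝ Y).le_of_opNorm_le_of_le le_rfl
          (mem_closedBall_zero_iff.1 hx.1)
      · exact mem_closedBall_iff_norm.1 (hmaps hx)

end IsWeaklyCompactOperator

end Operators

section Thickness

variable {Y : Type*} [NormedAddCommGroup Y] [NormedSpace ℝ Y]

lemma lt_norm_of_nonempty_sliceOf {f : Y →L[ℝ] ℝ} {b : ℝ}
    (h : (sliceOf (closedBall 0 1) f b).Nonempty) : b < ‖f‖ := by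
  obtain ⟨x, hx, hbx⟩ := h
  calc b < f x := hbx
    _ ≤ ‖f x‖ := le_abs_self _
    _ ≤ ‖f‖ := by simpa using f.le_of_opNorm_le_of_le le_rfl (mem_closedBall_zero_iff.1 hx)

lemma Ts_le_of_sliceOf_subset {f : Y →L[ℝ] ℝ} {b r : ℝ} {y : Y} (hf : f ≠ 0) (hy : ‖y‖ = 1)
    (hr : 0 < r) (hne : (sliceOf (closedBall 0 1) f b).Nonempty)
    (hsub : sliceOf (closedBall 0 1) f b ⊆ closedBall y r) : Ts Y ≤ r := by
  have hf₀ : 0 < ‖f‖ := norm_pos_iff.2 hf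
  have slice_eq : sliceSet Y (‖f‖⁻¹ • f) (1 - ‖f‖⁻¹ * b) = sliceOf (closedBall 0 1) f b := by
    rw [← sliceOf_smul _ f b (inv_pos.2 hf₀), sliceSet, sub_sub_cancel]
    rfl
  refine csInf_le ⟨0, fun s hs => hs.1.le⟩ ⟨hr, y, hy, _, ⟨NormedSpace.normalize f,
    NormedSpace.norm_normalize_eq_one_iff.2 hf, 1 - ‖f‖⁻¹ * b, ?_, rfl⟩,
    slice_eq.trans_subset hsub⟩
  rw [gt_iff_lt, sub_pos, inv_mul_lt_one₀ hf₀]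
  exact lt_norm_of_nonempty_sliceOf hne

lemma TsWStar_le_of_sliceOf_subset {z : Y} {b r : ℝ} {g : StrongDual ℝ Y} (hz : z ≠ 0)
    (hg : ‖g‖ = 1) (hr : 0 < r)
    (hne : (sliceOf (closedBall 0 1) (NormedSpace.inclusionInDoubleDual ℝ Y z) b).Nonempty)
    (hsub : sliceOf (closedBall 0 1) (NormedSpace.inclusionInDoubleDual ℝ Y z) b ⊆
      closedBall g r) : TsWStar Y ≤ r := by
  have hz₀ : 0 < ‖z‖ := norm_pos_iff.2 hz
  refine csInf_le ⟨0, fun s hs => hs.1.le⟩ ⟨hr, g, hg, NormedSpace.normalize z,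
    NormedSpace.norm_normalize_eq_one_iff.2 hz, 1 - ‖z‖⁻¹ * b, ?_, fun f ⟨hf, hbf⟩ => hsub ?_⟩
  · rw [gt_iff_lt, sub_pos, inv_mul_lt_one₀ hz₀]
    exact (lt_norm_of_nonempty_sliceOf hne).trans_eq
      ((NormedSpace.inclusionInDoubleDualLi ℝ).norm_map z)
  · rw [← sliceOf_smul _ _ b (inv_pos.2 hz₀)]
    refine ⟨mem_closedBall_zero_iff.2 hf, ?_⟩
    rwa [sub_sub_cancel, NormedSpace.normalize, map_smul] at hbf

end Thickness

theorem stmt_16_general (X : Type*) [NormedAddCommGroup X] [NormedSpace ℝ X] (T : X →L[ℝ] X)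
    (hT : ‖T‖ = 1)
    (hwc : IsCompact (closure (toWeakSpace ℝ X '' (T '' closedBall (0 : X) 1)))) :
    max (Ts X) (TsWStar X) ≤ ‖T + ContinuousLinearMap.id ℝ X‖ := by
  have hwc : IsWeaklyCompactOperator T := hwc
  refine max_le (le_of_forall_pos_le_add fun ε hε => ?_) (le_of_forall_pos_le_add fun ε hε => ?_)
  · obtain ⟨y, f, b, hy, hf, hne, hsub⟩ := hwc.exists_sliceOf_subset_closedBall_norm_add_id hT hε
    exact Ts_le_of_sliceOf_subset hf hy (by positivity) hne hsub
  · obtain ⟨g, F, b, hg, hF, hne, hsub⟩ :=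
      hwc.precomp.exists_sliceOf_subset_closedBall_norm_add_id ((norm_precomp T).trans hT) hε
    obtain ⟨z, hz⟩ := hwc.exists_comp_precomp_eq_inclusionInDoubleDual F
    rw [hz] at hF hne hsub
    rw [norm_precomp_add_id] at hsub
    exact TsWStar_le_of_sliceOf_subset (fun hz₀ => hF (by rw [hz₀, map_zero])) hg (by positivity)
      hne hsub

theorem stmt_16 (X : Type*) [NormedAddCommGroup X] [NormedSpace ℝ X] [CompleteSpace X]
    [Nontrivial X] (T : X →L[ℝ] X) (hT : ‖T‖ = 1)
    (hwc : IsCompact (closure (toWeakSpace ℝ X '' (T '' closedBall (0 : X) 1)))) :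
    max (Ts X) (TsWStar X) ≤ ‖T + ContinuousLinearMap.id ℝ X‖ :=
  stmt_16_general X T hT hwc
end
end
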